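/- Let P₂ := 𝒞(2^ω, [0,1]^{2^{<ω}}) with the topology of uniform convergence, and let C₂ := {h ∈ P₂ : h(β) ∉ 𝓟 for every β ∈ 2^ω}. Then C₂ is Π¹₂-complete: (i) the complement of C₂ in P₂ equals the projection to P₂ of the coanalytic set {(h,β) ∈ P₂ × 2^ω : h(β) ∈ 𝓟}, so C₂ is a Π¹₂ set; and (ii) for every subset A of 2^ω whose complement is the projection to 2^ω of some coanalytic subset of 2^ω × ω^ω (i.e., every Π¹₂ subset A of 2^ω), there is a continuous map g : 2^ω → P₂ with A = g⁻¹(C₂). -/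

import Mathlib

open MeasureTheory Filter Topology
open scoped ENNReal

/-- The basic cylinder `N_s` determined by a finite binary sequence `s`:
the set of all `β ∈ 2^ω` extending `s`. -/
def cyl (s : List Bool) : Set (ℕ → Bool) :=
  {β | ∀ i : Fin s.length, β i = s.get i}

/-- The initial segment `β↾l` of `β ∈ 2^ω`, as a finite binary sequence. -/
def seg (β : ℕ → Bool) (l : ℕ) : List Bool := List.ofFn (fun i : Fin l => β i)

/-- A martingale: a `[0,1]`-valued function on finite binary sequences with
`f(s) = (f(s⌢0) + f(s⌢1))/2`. -/
def IsMartingale (f : List Bool → ℝ) : Prop :=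
  (∀ s, f s ∈ Set.Icc (0:ℝ) 1) ∧
  ∀ s, f s = (f (s ++ [false]) + f (s ++ [true])) / 2

/-- The oscillation `osc(f,β) = inf_N sup_{p,q ≥ N} |f(β↾p) − f(β↾q)|`. -/
noncomputable def osc (f : List Bool → ℝ) (β : ℕ → Bool) : ℝ :=
  ⨅ N : ℕ, ⨆ p : {n : ℕ // N ≤ n}, ⨆ q : {n : ℕ // N ≤ n},
    |f (seg β p.1) - f (seg β q.1)|

/-- The set of divergence `D(f) = {β : osc(f,β) > 0}`. -/
def divSet (f : List Bool → ℝ) : Set (ℕ → Bool) := {β | 0 < osc f β}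

/-- `M` has density 1 at `β`: `λ(M ∩ N_{β↾l}) / λ(N_{β↾l}) → 1`. -/
def densityOne (μ : Measure (ℕ → Bool)) (M : Set (ℕ → Bool)) (β : ℕ → Bool) : Prop :=
  Tendsto (fun l : ℕ => μ (M ∩ cyl (seg β l)) / μ (cyl (seg β l))) atTop (𝓝 1)

/-- A set is `Σ⁰₃` iff it is a countable union of `Gδ` sets. -/
def IsSigma03 {X : Type*} [TopologicalSpace X] (S : Set X) : Prop :=
  ∃ g : ℕ → Set X, (∀ n, IsGδ (g n)) ∧ S = ⋃ n, g n

/-- A set is coanalytic (`Π¹₁`) iff its complement is analytic. -/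
def IsCoanalytic {X : Type*} [TopologicalSpace X] (S : Set X) : Prop :=
  MeasureTheory.AnalyticSet Sᶜ

/-- The associated (partial) function of a martingale: `ψ(f)(β) = lim_l f(β↾l)`
(a junk value if the limit does not exist). -/
noncomputable def psi (f : List Bool → ℝ) (β : ℕ → Bool) : ℝ :=
  limUnder atTop (fun l => f (seg β l))

/-- The Polish space `P₂ = 𝒞(2^ω, [0,1]^{2^{<ω}})` with the topology of
uniform convergence (= compact-open topology). -/
abbrev Ptwo := C((ℕ → Bool), (List Bool → ℝ))

/-- The set `𝓟` of everywhere converging martingales, inside `[0,1]^{2^{<ω}}`. -/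
def Pconv : Set (List Bool → ℝ) :=
  {f | IsMartingale f ∧ ∀ β : ℕ → Bool, osc f β = 0}

/-- `C₂ = {h ∈ P₂ : h(β) ∉ 𝓟 for all β}`. -/
def Ctwo : Set Ptwo := {h | ∀ β : ℕ → Bool, h β ∉ Pconv}

/-!
A gambler with capital `1/3` or `2/3` who bets on the next bit being `true`, where a win swaps these
two values and a loss ends the game, has divergent capital exactly along the paths on which he bets
infinitely often and always wins. Such a path can encode an infinite clique of a graph on a
countable set: even bits select vertices, and he bets each time the selected vertex is adjacent to
all previous ones. An analytic set consists of the points at which a Suslin tree has an infinite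
branch, that is, at which the comparability graph of the tree has an infinite clique. So the points
outside an analytic set reduce continuously to `𝓟`; with the second coordinate of a coanalytic
subset of `2^ω × 2^ω` used as the argument of an element of `P₂`, its projection reduces to the
complement of `C₂`.
-/

lemma seg_succ (β : ℕ → Bool) (n : ℕ) : seg β (n + 1) = seg β n ++ [β n] := by
  rw [seg, List.ofFn_succ_last]
  rfl

@[simp]
lemma length_seg (β : ℕ → Bool) (n : ℕ) : (seg β n).length = n := by
  simp [seg]

lemma getElem?_seg_eq_some_iff {β : ℕ → Bool} {n i : ℕ} {b : Bool} :
    (seg β n)[i]? = some b ↔ i < n ∧ β i = b := by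
  simp [seg, List.getElem?_ofFn]

section Oscillation

variable {f : List Bool → ℝ} {β : ℕ → Bool}

lemma osc_eq_zero_of_eventuallyConst (h : EventuallyConst (fun n => f (seg β n)) atTop) :
    osc f β = 0 := by
  obtain ⟨N, hN⟩ := eventuallyConst_atTop.1 h
  have tail_nonneg (N : ℕ) : 0 ≤ ⨆ p : {n : ℕ // N ≤ n}, ⨆ q : {n : ℕ // N ≤ n},
      |f (seg β p.1) - f (seg β q.1)| :=
    Real.iSup_nonneg fun p => Real.iSup_nonneg fun q => abs_nonneg _
  have tail_eq_zero : (⨆ p : {n : ℕ // N ≤ n}, ⨆ q : {n : ℕ // N ≤ n},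
      |f (seg β p.1) - f (seg β q.1)|) = 0 := by
    simp [hN _ (Subtype.prop _)]
  exact le_antisymm ((ciInf_le ⟨0, Set.forall_mem_range.2 tail_nonneg⟩ N).trans_eq tail_eq_zero)
    (Real.iInf_nonneg tail_nonneg)

lemma le_osc_of_frequently (hf : Bornology.IsBounded (Set.range f)) {δ : ℝ}
    (h : ∃ᶠ n in atTop, δ ≤ |f (seg β (n + 1)) - f (seg β n)|) : δ ≤ osc f β := by
  obtain ⟨C, hC⟩ := Metric.isBounded_iff.1 hf
  have abs_le (s t : List Bool) : |f s - f t| ≤ C := hC ⟨s, rfl⟩ ⟨t, rfl⟩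
  refine le_ciInf fun N => ?_
  obtain ⟨n, hNn, hδ⟩ := frequently_atTop.1 h N
  have : Nonempty {n : ℕ // N ≤ n} := ⟨⟨N, le_rfl⟩⟩
  calc δ ≤ |f (seg β (n + 1)) - f (seg β n)| := hδ
    _ ≤ ⨆ q : {n : ℕ // N ≤ n}, |f (seg β (n + 1)) - f (seg β q.1)| :=
      le_ciSup (f := fun q : {n : ℕ // N ≤ n} => |f (seg β (n + 1)) - f (seg β q.1)|)
        ⟨C, Set.forall_mem_range.2 fun _ => abs_le _ _⟩ ⟨n, hNn⟩
    _ ≤ _ :=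
      le_ciSup (f := fun p : {n : ℕ // N ≤ n} => ⨆ q : {n : ℕ // N ≤ n},
          |f (seg β p.1) - f (seg β q.1)|)
        ⟨C, Set.forall_mem_range.2 fun _ => ciSup_le fun _ => abs_le _ _⟩ ⟨n + 1, by omega⟩

end Oscillation

section Coanalytic

lemma measurable_eval_seg (n : ℕ) :
    Measurable fun q : (List Bool → ℝ) × (ℕ → Bool) => q.1 (seg q.2 n) := by
  have eval_ofFn : Measurable fun q : (Fin n → Bool) × (List Bool → ℝ) => q.2 (List.ofFn q.1) :=
    measurable_from_prod_countable_right fun t => measurable_pi_apply (List.ofFn t)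
  have restrict : Measurable fun q : (List Bool → ℝ) × (ℕ → Bool) => fun i : Fin n => q.2 i := by
    fun_prop
  exact eval_ofFn.comp (restrict.prodMk measurable_fst)

lemma measurable_osc : Measurable fun q : (List Bool → ℝ) × (ℕ → Bool) => osc q.1 q.2 :=
  .iInf fun _ => .iSup fun _ => .iSup fun _ =>
    ((measurable_eval_seg _).sub (measurable_eval_seg _)).abs

lemma measurableSet_isMartingale : MeasurableSet {f : List Bool → ℝ | IsMartingale f} := by
  simp only [IsMartingale, Set.mem_Icc]
  measurability

lemma analyticSet_union {X : Type*} [TopologicalSpace X] {s t : Set X}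
    (hs : AnalyticSet s) (ht : AnalyticSet t) : AnalyticSet (s ∪ t) :=
  Set.union_eq_iUnion ▸ .iUnion (Bool.forall_bool.2 ⟨ht, hs⟩)

lemma analyticSet_compl_Pconv : AnalyticSet Pconvᶜ := by
  have compl_eq : Pconvᶜ = {f | IsMartingale f}ᶜ ∪
      Prod.fst '' {q : (List Bool → ℝ) × (ℕ → Bool) | osc q.1 q.2 ≠ 0} := by
    ext f
    simp [Pconv, imp_iff_not_or]
  have measurableSet_osc_ne_zero :
      MeasurableSet {q : (List Bool → ℝ) × (ℕ → Bool) | osc q.1 q.2 ≠ 0} :=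
    (measurableSet_eq_fun measurable_osc measurable_const).compl
  have : PolishSpace (List Bool → ℝ) := PolishSpace.mk
  have : PolishSpace ((List Bool → ℝ) × (ℕ → Bool)) := PolishSpace.mk
  rw [compl_eq]
  exact analyticSet_union measurableSet_isMartingale.compl.analyticSet
    (measurableSet_osc_ne_zero.analyticSet.image_of_continuous continuous_fst)

lemma isCoanalytic_eval_mem_Pconv :
    IsCoanalytic {p : Ptwo × (ℕ → Bool) | p.1 p.2 ∈ Pconv} :=
  have : PolishSpace (Ptwo × (ℕ → Bool)) := PolishSpace.mk
  analyticSet_compl_Pconv.preimage (f := fun p : Ptwo × (ℕ → Bool) => p.1 p.2) (by fun_prop)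

lemma compl_Ctwo : Ctwoᶜ = Prod.fst '' {p : Ptwo × (ℕ → Bool) | p.1 p.2 ∈ Pconv} := by
  ext h
  simp [Ctwo]

end Coanalytic

section Betting

open Classical in
/-- The martingale of a gambler who starts with capital `1/3` and who, at each node of `S` reached
with capital `1/3` or `2/3`, bets on the next bit being `true`: a win swaps these two capitals,
whereas a loss ends the game with capital `0` or `1`. The bets are fair since
`v = ((3 * v - 1) + (1 - v)) / 2`. -/
noncomputable def bettingMartingale (S : Set (List Bool)) (s : List Bool) : ℝ :=
  s.reverseRecOn (1 / 3) fun t b v =>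
    if t ∈ S ∧ (v = 1 / 3 ∨ v = 2 / 3) then (if b then 1 - v else 3 * v - 1) else v

variable {S : Set (List Bool)} {β : ℕ → Bool} {n : ℕ}

@[simp]
lemma bettingMartingale_nil : bettingMartingale S [] = 1 / 3 := by
  simp [bettingMartingale]

open Classical in
lemma bettingMartingale_concat (s : List Bool) (b : Bool) :
    bettingMartingale S (s ++ [b]) =
      if s ∈ S ∧ (bettingMartingale S s = 1 / 3 ∨ bettingMartingale S s = 2 / 3) then
        (if b then 1 - bettingMartingale S s else 3 * bettingMartingale S s - 1)
      else bettingMartingale S s := by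
  rw [bettingMartingale, List.reverseRecOn_concat]
  rfl

lemma isMartingale_bettingMartingale : IsMartingale (bettingMartingale S) := by
  refine ⟨fun s => ?_, fun s => ?_⟩
  · induction s using List.reverseRecOn with
    | nil => norm_num
    | append_singleton s b ih =>
      rw [bettingMartingale_concat]
      split_ifs with hs hb
      · exact ⟨by linarith [ih.2], by linarith [ih.1]⟩
      · rcases hs.2 with h | h <;> norm_num [h]
      · exact ih
  · simp only [bettingMartingale_concat, Bool.false_eq_true, if_true, if_false]
    split_ifs <;> ring

lemma bettingMartingale_seg_succ_of_notMem (h : seg β n ∉ S) :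
    bettingMartingale S (seg β (n + 1)) = bettingMartingale S (seg β n) := by
  rw [seg_succ, bettingMartingale_concat, if_neg fun hs => h hs.1]

lemma bettingMartingale_seg_of_forall_win (hwin : ∀ n, seg β n ∈ S → β n = true) (n : ℕ) :
    bettingMartingale S (seg β n) = 1 / 3 ∨ bettingMartingale S (seg β n) = 2 / 3 := by
  induction n with
  | zero => exact .inl bettingMartingale_nil
  | succ n ih =>
    by_cases hS : seg β n ∈ S
    · rw [seg_succ, bettingMartingale_concat, if_pos ⟨hS, ih⟩, if_pos (hwin n hS)]
      rcases ih with h | h <;> norm_num [h]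
    · rwa [bettingMartingale_seg_succ_of_notMem hS]

lemma osc_bettingMartingale_ne_zero (hinf : ∃ᶠ n in atTop, seg β n ∈ S)
    (hwin : ∀ n, seg β n ∈ S → β n = true) : osc (bettingMartingale S) β ≠ 0 := by
  have isBounded : Bornology.IsBounded (Set.range (bettingMartingale S)) :=
    (Metric.isBounded_Icc 0 1).subset (Set.range_subset_iff.2 isMartingale_bettingMartingale.1)
  have jump (n : ℕ) (hS : seg β n ∈ S) : 1 / 3 ≤
      |bettingMartingale S (seg β (n + 1)) - bettingMartingale S (seg β n)| := by
    have hcap := bettingMartingale_seg_of_forall_win hwin n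
    rw [seg_succ, bettingMartingale_concat, if_pos ⟨hS, hcap⟩, if_pos (hwin n hS)]
    rcases hcap with h | h <;> norm_num [h, abs_of_neg]
  linarith [le_osc_of_frequently isBounded (hinf.mono jump)]

lemma bettingMartingale_seg_eq_of_lost {m : ℕ} (hm : seg β m ∈ S) (hlost : β m = false)
    (hn : m + 1 ≤ n) :
    bettingMartingale S (seg β n) = bettingMartingale S (seg β (m + 1)) := by
  set v := bettingMartingale S (seg β (m + 1)) with hv
  have ruined : ¬(v = 1 / 3 ∨ v = 2 / 3) := by
    rw [hv, seg_succ, bettingMartingale_concat, hlost]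
    by_cases hcap : bettingMartingale S (seg β m) = 1 / 3 ∨ bettingMartingale S (seg β m) = 2 / 3
    · rw [if_pos ⟨hm, hcap⟩]
      rcases hcap with h | h <;> norm_num [h]
    · rwa [if_neg fun h => hcap h.2]
  induction n, hn using Nat.le_induction with
  | base => rfl
  | succ n _ ih => rw [seg_succ, bettingMartingale_concat, if_neg (fun h => ruined (ih ▸ h.2)), ih]

lemma osc_bettingMartingale_eq_zero
    (h : ¬((∃ᶠ n in atTop, seg β n ∈ S) ∧ ∀ n, seg β n ∈ S → β n = true)) :
    osc (bettingMartingale S) β = 0 := by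
  apply osc_eq_zero_of_eventuallyConst
  by_cases hinf : ∃ᶠ n in atTop, seg β n ∈ S
  · obtain ⟨m, hm, hlost⟩ : ∃ m, seg β m ∈ S ∧ β m = false := by
      simpa [hinf] using h
    exact eventuallyConst_atTop.2 ⟨m + 1, fun _ => bettingMartingale_seg_eq_of_lost hm hlost⟩
  · obtain ⟨N, hN⟩ := eventually_atTop.1 (not_frequently.1 hinf)
    exact eventuallyConst_atTop_nat.2
      ⟨N, fun n hn => bettingMartingale_seg_succ_of_notMem (hN n hn)⟩

theorem bettingMartingale_notMem_Pconv_iff :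
    bettingMartingale S ∉ Pconv ↔
      ∃ β, (∃ᶠ n in atTop, seg β n ∈ S) ∧ ∀ n, seg β n ∈ S → β n = true := by
  constructor
  · refine fun hdiv => by_contra fun hno => hdiv ⟨isMartingale_bettingMartingale, fun β => ?_⟩
    exact osc_bettingMartingale_eq_zero fun hβ => hno ⟨β, hβ⟩
  · rintro ⟨β, hinf, hwin⟩ hconv
    exact osc_bettingMartingale_ne_zero hinf hwin (hconv.2 β)

lemma continuous_bettingMartingale {Z : Type*} [TopologicalSpace Z] {S : Z → Set (List Bool)}
    (hS : ∀ s, IsLocallyConstant fun z => s ∈ S z) :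
    Continuous fun z => bettingMartingale (S z) := by
  classical
  refine continuous_pi fun s => IsLocallyConstant.continuous ?_
  induction s using List.reverseRecOn with
  | nil => simp only [bettingMartingale_nil]; exact .const (1 / 3)
  | append_singleton s b ih =>
    simp only [bettingMartingale_concat]
    exact (hS s).comp₂ ih fun P v =>
      if P ∧ (v = 1 / 3 ∨ v = 2 / 3) then (if b then 1 - v else 3 * v - 1) else v

end Betting

section Clique

variable {V : Type*} [Encodable V]

/-- The nodes at which a gambler bets who looks for an infinite clique of `G`. Along a path `β`,
the even bits select vertices: `v` is selected if `β (2 * encode v) = true`. The bet on the odd bit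
`β (2 * encode v + 1)` is placed if `v` is selected and adjacent to all vertices selected before.
Requiring `true` at all bets does not restrict which vertices can be selected. -/
def cliqueBets (G : SimpleGraph V) : Set (List Bool) :=
  {s | ∃ v, s.length = 2 * Encodable.encode v + 1 ∧ s[2 * Encodable.encode v]? = some true ∧
    ∀ u, Encodable.encode u < Encodable.encode v → s[2 * Encodable.encode u]? = some true →
      G.Adj u v}

variable {G : SimpleGraph V} {β : ℕ → Bool} {n : ℕ}

lemma seg_mem_cliqueBets_iff :
    seg β n ∈ cliqueBets G ↔ ∃ v, n = 2 * Encodable.encode v + 1 ∧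
      β (2 * Encodable.encode v) = true ∧
      ∀ u, Encodable.encode u < Encodable.encode v → β (2 * Encodable.encode u) = true →
        G.Adj u v := by
  simp only [cliqueBets, Set.mem_ofPred_eq, length_seg, getElem?_seg_eq_some_iff, and_imp]
  refine exists_congr fun v => and_congr_right fun hn => ?_
  subst hn
  exact and_congr (and_iff_right (by omega))
    (forall₂_congr fun u hu => forall_prop_of_true (by omega))

lemma exists_infinite_isClique_of_frequently (h : ∃ᶠ n in atTop, seg β n ∈ cliqueBets G) :
    ∃ M : Set V, M.Infinite ∧ G.IsClique M := by
  refine ⟨{v | seg β (2 * Encodable.encode v + 1) ∈ cliqueBets G}, ?_, ?_⟩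
  · refine Set.Infinite.of_image (fun v => 2 * Encodable.encode v + 1)
      ((Nat.frequently_atTop_iff_infinite.1 h).mono fun n hn => ?_)
    obtain ⟨v, rfl, -⟩ := seg_mem_cliqueBets_iff.1 hn
    exact ⟨v, hn, rfl⟩
  · have selected_and_adj {v : V} (hv : seg β (2 * Encodable.encode v + 1) ∈ cliqueBets G) :
        β (2 * Encodable.encode v) = true ∧ ∀ u, Encodable.encode u < Encodable.encode v →
          β (2 * Encodable.encode u) = true → G.Adj u v := by
      obtain ⟨w, hw, hbet⟩ := seg_mem_cliqueBets_iff.1 hv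
      obtain rfl : v = w := Encodable.encode_injective (by omega)
      exact hbet
    intro u hu v hv huv
    obtain ⟨hu, adj_u⟩ := selected_and_adj hu
    obtain ⟨hv, adj_v⟩ := selected_and_adj hv
    rcases (Encodable.encode_injective.ne huv).lt_or_gt with hlt | hlt
    · exact adj_v u hlt hu
    · exact (adj_u v hlt hv).symm

lemma exists_path_of_infinite_isClique {M : Set V} (hM : M.Infinite) (hG : G.IsClique M) :
    ∃ β, (∃ᶠ n in atTop, seg β n ∈ cliqueBets G) ∧ ∀ n, seg β n ∈ cliqueBets G → β n = true := by
  classical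
  let β : ℕ → Bool := fun n => decide (∀ v : V, n = 2 * Encodable.encode v → v ∈ M)
  have selected_iff (v : V) : β (2 * Encodable.encode v) = true ↔ v ∈ M := by
    simp [β]
  refine ⟨β, ?_, fun n hn => ?_⟩
  · have injective : Function.Injective fun v : V => 2 * Encodable.encode v + 1 := fun u v huv =>
      Encodable.encode_injective (by simpa using huv)
    refine Nat.frequently_atTop_iff_infinite.2
      ((hM.image injective.injOn).mono (Set.image_subset_iff.2 fun v hv => ?_))
    refine seg_mem_cliqueBets_iff.2 ⟨v, rfl, (selected_iff v).2 hv, fun u hlt hu => ?_⟩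
    exact hG ((selected_iff u).1 hu) hv (ne_of_apply_ne _ hlt.ne)
  · obtain ⟨v, rfl, -⟩ := seg_mem_cliqueBets_iff.1 hn
    exact decide_eq_true fun w hw => by omega

theorem bettingMartingale_cliqueBets_notMem_Pconv_iff :
    bettingMartingale (cliqueBets G) ∉ Pconv ↔ ∃ M : Set V, M.Infinite ∧ G.IsClique M := by
  rw [bettingMartingale_notMem_Pconv_iff]
  exact ⟨fun ⟨_, hinf, _⟩ => exists_infinite_isClique_of_frequently hinf,
    fun ⟨_, hM, hG⟩ => exists_path_of_infinite_isClique hM hG⟩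

lemma isLocallyConstant_mem_cliqueBets {Z : Type*} [TopologicalSpace Z] {G : Z → SimpleGraph V}
    (hG : ∀ u v, IsLocallyConstant fun z => (G z).Adj u v) (s : List Bool) :
    IsLocallyConstant fun z => s ∈ cliqueBets (G z) := by
  let W : Set V := {v | Encodable.encode v < s.length}
  have finite_W : W.Finite :=
    (Set.finite_lt_nat s.length).preimage Encodable.encode_injective.injOn
  refine (IsLocallyConstant.iff_eventually_eq _).2 fun z => ?_
  have eventually_adj : ∀ᶠ z' in 𝓝 z, ∀ u ∈ W, ∀ v ∈ W, (G z').Adj u v = (G z).Adj u v :=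
    (eventually_all_finite finite_W).2 fun u _ =>
      (eventually_all_finite finite_W).2 fun v _ => (hG u v).eventually_eq z
  filter_upwards [eventually_adj] with z' hz'
  refine propext (exists_congr fun v => and_congr_right fun hs => and_congr_right fun _ =>
    forall₃_congr fun u hu _ => (hz' u ?_ v ?_).to_iff)
  · exact (by omega : Encodable.encode u < s.length)
  · exact (by omega : Encodable.encode v < s.length)

end Clique

section Tree

variable {α γ : Type*}

/-- The tree of attempts to find `x` with `φ x = z`: the finite sequences `t` that can be extended
to an `x` for which `φ x` agrees with `z` up to the length of `t`. -/
def approxTree (φ : (ℕ → α) → ℕ → γ) (z : ℕ → γ) : Set (List α) :=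
  {t | ∃ x : ℕ → α, (∀ i (hi : i < t.length), x i = t[i]) ∧ ∀ i < t.length, φ x i = z i}

/-- The comparability graph of the tree `approxTree φ z`; its infinite cliques correspond to
infinite branches. -/
def approxGraph (φ : (ℕ → α) → ℕ → γ) (z : ℕ → γ) : SimpleGraph (List α) where
  Adj u v := u ≠ v ∧ (u <+: v ∨ v <+: u) ∧ u ∈ approxTree φ z ∧ v ∈ approxTree φ z
  symm := ⟨fun _ _ h => ⟨h.1.symm, h.2.1.symm, h.2.2.symm⟩⟩

lemma exists_le_length_of_infinite_isChain {M : Set (List α)} (hM : M.Infinite)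
    (hchain : IsChain (· <+: ·) M) (n : ℕ) : ∃ t ∈ M, n ≤ t.length := by
  have injOn : Set.InjOn List.length M := fun u hu v hv huv =>
    (hchain.total hu hv).elim (·.eq_of_length huv) fun h => (h.eq_of_length huv.symm).symm
  obtain ⟨_, ⟨t, ht, rfl⟩, hn⟩ := (hM.image injOn).exists_gt n
  exact ⟨t, ht, hn.le⟩

lemma exists_branch_of_infinite_isChain {M : Set (List α)} (hM : M.Infinite)
    (hchain : IsChain (· <+: ·) M) :
    ∃ x : ℕ → α, ∀ t ∈ M, ∀ i (hi : i < t.length), x i = t[i] := by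
  choose u hu hlen using fun i : ℕ => exists_le_length_of_infinite_isChain hM hchain (i + 1)
  refine ⟨fun i => (u i)[i]'(hlen i), fun t ht i hi => ?_⟩
  rcases hchain.total (hu i) ht with h | h
  · exact h.getElem _
  · exact (h.getElem hi).symm

variable {φ : (ℕ → α) → ℕ → γ} {z : ℕ → γ}

lemma exists_infinite_isClique_of_mem_range (hz : z ∈ Set.range φ) :
    ∃ M, M.Infinite ∧ (approxGraph φ z).IsClique M := by
  obtain ⟨x, rfl⟩ := hz
  let branch (n : ℕ) : List α := List.ofFn fun i : Fin n => x i
  have length_branch (n : ℕ) : (branch n).length = n := List.length_ofFn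
  have mem_tree (n : ℕ) : branch n ∈ approxTree φ (φ x) := ⟨x, by simp [branch], by simp⟩
  have prefix_of_le {m n : ℕ} (hmn : m ≤ n) : branch m <+: branch n :=
    List.prefix_iff_getElem.2 ⟨by simpa [length_branch], by simp [branch]⟩
  refine ⟨Set.range branch, Set.infinite_range_of_injective
    (Function.LeftInverse.injective length_branch), ?_⟩
  rintro _ ⟨m, rfl⟩ _ ⟨n, rfl⟩ hne
  exact ⟨hne, (le_total m n).imp prefix_of_le prefix_of_le, mem_tree m, mem_tree n⟩

variable [TopologicalSpace γ]

lemma isLocallyConstant_adj_approxGraph [DiscreteTopology γ] (u v : List α) :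
    IsLocallyConstant fun z => (approxGraph φ z).Adj u v := by
  have mem_tree (t : List α) : IsLocallyConstant fun z : ℕ → γ => t ∈ approxTree φ z := by
    refine (IsLocallyConstant.iff_eventually_eq _).2 fun z => ?_
    have eventually_agree : ∀ᶠ z' : ℕ → γ in 𝓝 z, ∀ i < t.length, z' i = z i :=
      (eventually_all_finite (Set.finite_lt_nat _)).2 fun i _ =>
        (IsLocallyConstant.of_discrete id).comp_continuous (continuous_apply i)
          |>.eventually_eq z
    filter_upwards [eventually_agree] with z' hz'
    refine propext (exists_congr fun x => and_congr_right fun _ => forall₂_congr fun i hi => ?_)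
    rw [hz' i hi]
  exact (mem_tree u).comp₂ (mem_tree v) fun P Q => u ≠ v ∧ (u <+: v ∨ v <+: u) ∧ P ∧ Q

lemma mem_range_of_infinite_isClique [TopologicalSpace α] [T2Space γ] (hφ : Continuous φ)
    {M : Set (List α)} (hM : M.Infinite) (hG : (approxGraph φ z).IsClique M) : z ∈ Set.range φ := by
  have hchain : IsChain (· <+: ·) M := fun u hu v hv huv => (hG hu hv huv).2.1
  have subset_tree : M ⊆ approxTree φ z := fun u hu =>
    have ⟨_, hv, hvu⟩ := hM.nontrivial.exists_ne u
    (hG hu hv hvu.symm).2.2.1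
  obtain ⟨x, hx⟩ := exists_branch_of_infinite_isChain hM hchain
  choose t htM hlen using exists_le_length_of_infinite_isChain hM hchain
  choose y hyt hyz using fun k => subset_tree (htM k)
  have tendsto_x : Tendsto y atTop (𝓝 x) := tendsto_pi_nhds.2 fun i =>
    tendsto_const_nhds.congr' <| (eventually_gt_atTop i).mono fun k hk =>
      have hi := hk.trans_le (hlen k)
      (hx _ (htM k) i hi).trans (hyt k i hi).symm
  have tendsto_z : Tendsto (fun k => φ (y k)) atTop (𝓝 z) := tendsto_pi_nhds.2 fun i =>
    tendsto_const_nhds.congr' <| (eventually_gt_atTop i).mono fun k hk =>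
      (hyz k i (hk.trans_le (hlen k))).symm
  exact ⟨x, tendsto_nhds_unique ((hφ.tendsto x).comp tendsto_x) tendsto_z⟩

end Tree

section CantorEmbedding

instance totallySeparatedSpace_pi {ι : Type*} {X : ι → Type*} [∀ i, TopologicalSpace (X i)]
    [∀ i, TotallySeparatedSpace (X i)] : TotallySeparatedSpace (∀ i, X i) := by
  refine totallySeparatedSpace_iff_exists_isClopen.2 fun x y hxy => ?_
  obtain ⟨i, hi⟩ := Function.ne_iff.1 hxy
  obtain ⟨U, hU, hx, hy⟩ := exists_isClopen_of_totally_separated hi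
  exact ⟨_, hU.preimage (continuous_apply i), hx, hy⟩

variable {Z : Type*} [TopologicalSpace Z] [SecondCountableTopology Z] [TotallySeparatedSpace Z]

lemma exists_seq_isClopen_separating :
    ∃ U : ℕ → Set Z, (∀ n, IsClopen (U n)) ∧ ∀ x y, (∀ n, x ∈ U n ↔ y ∈ U n) → x = y := by
  obtain ⟨T, hT, hcover⟩ := TopologicalSpace.isOpen_iUnion_countable
    (fun U : {U : Set Z // IsClopen U} => U.1 ×ˢ U.1ᶜ)
    fun U => U.2.isOpen.prod U.2.compl.isOpen
  have : HasCountableSeparatingOn Z IsClopen Set.univ := by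
    refine ⟨Subtype.val '' T, hT.image _, ?_, fun x _ y _ hxy => by_contra fun hne => ?_⟩
    · rintro _ ⟨U, -, rfl⟩
      exact U.2
    obtain ⟨U, hU, hx, hy⟩ := exists_isClopen_of_totally_separated hne
    have mem_cover : (x, y) ∈ ⋃ U ∈ T, U.1 ×ˢ U.1ᶜ := hcover ▸ Set.mem_iUnion.2 ⟨⟨U, hU⟩, hx, hy⟩
    obtain ⟨V, hV, hxV, hyV⟩ := Set.mem_iUnion₂.1 mem_cover
    exact hyV ((hxy V ⟨V, hV, rfl⟩).1 hxV)
  obtain ⟨U, hU, hsep⟩ := exists_seq_separating Z isClopen_empty Set.univ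
  exact ⟨U, hU, fun x y => hsep x trivial y trivial⟩

lemma exists_continuous_injective_cantor :
    ∃ e : Z → ℕ → Bool, Continuous e ∧ Function.Injective e := by
  obtain ⟨U, hU, hsep⟩ := exists_seq_isClopen_separating (Z := Z)
  refine ⟨fun x n => (U n).boolIndicator x,
    continuous_pi fun n => (continuous_boolIndicator_iff_isClopen _).2 (hU n), fun x y hxy => ?_⟩
  refine hsep x y fun n => ?_
  rw [Set.mem_iff_boolIndicator, Set.mem_iff_boolIndicator]
  exact congrArg (· = true) (congrFun hxy n) |>.to_iff

end CantorEmbedding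

section Reduction

variable {X Y Z : Type*} [TopologicalSpace X] [TopologicalSpace Y] [TopologicalSpace Z]

lemma exists_continuous_mem_Pconv_iff_cantor {E : Set (ℕ → Bool)} (hE : AnalyticSet E) :
    ∃ F : (ℕ → Bool) → List Bool → ℝ, Continuous F ∧ ∀ z, F z ∈ Pconv ↔ z ∉ E := by
  suffices ∃ G : (ℕ → Bool) → SimpleGraph (List ℕ),
      (∀ u v, IsLocallyConstant fun z => (G z).Adj u v) ∧
        ∀ z, z ∈ E ↔ ∃ M, M.Infinite ∧ (G z).IsClique M by
    obtain ⟨G, hadj, hclique⟩ := this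
    refine ⟨fun z => bettingMartingale (cliqueBets (G z)),
      continuous_bettingMartingale (isLocallyConstant_mem_cliqueBets hadj), fun z => ?_⟩
    rw [hclique, ← bettingMartingale_cliqueBets_notMem_Pconv_iff, not_not]
  rw [AnalyticSet] at hE
  rcases hE with rfl | ⟨φ, hφ, rfl⟩
  · refine ⟨fun _ => ⊥, fun _ _ => .const _, fun z => iff_of_false (Set.notMem_empty z) ?_⟩
    rintro ⟨M, hM, hclique⟩
    exact hM (SimpleGraph.isClique_bot_iff.1 hclique).finite
  · exact ⟨approxGraph φ, isLocallyConstant_adj_approxGraph, fun z =>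
      ⟨exists_infinite_isClique_of_mem_range, fun ⟨_, hM, hclique⟩ =>
        mem_range_of_infinite_isClique hφ hM hclique⟩⟩

lemma exists_continuous_mem_Pconv_iff [SecondCountableTopology Z] [TotallySeparatedSpace Z]
    {E : Set Z} (hE : AnalyticSet E) :
    ∃ F : Z → List Bool → ℝ, Continuous F ∧ ∀ z, F z ∈ Pconv ↔ z ∉ E := by
  obtain ⟨e, he, inj⟩ := exists_continuous_injective_cantor (Z := Z)
  obtain ⟨F, hF, hFE⟩ := exists_continuous_mem_Pconv_iff_cantor (hE.image_of_continuous he)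
  exact ⟨F ∘ e, hF.comp he, fun z => by rw [Function.comp_apply, hFE, inj.mem_set_image]⟩

lemma exists_continuous_preimage_Ctwo_eq [SecondCountableTopology X] [TotallySeparatedSpace X]
    [PolishSpace Y] [TotallySeparatedSpace Y] {D : Set (X × Y)} (hD : IsCoanalytic D) :
    ∃ g : X → Ptwo, Continuous g ∧ (Prod.fst '' D)ᶜ = g ⁻¹' Ctwo := by
  obtain ⟨e, he, he_inj⟩ := exists_continuous_injective_cantor (Z := X)
  obtain ⟨c, hc, hc_inj⟩ := exists_continuous_injective_cantor (Z := Y)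
  -- Elements of `Ptwo` are defined on all of `2^ω`: the points outside the image of `Y` are put
  -- into `E`, so that they contribute nothing to the projection of its complement.
  let E : Set ((ℕ → Bool) × (ℕ → Bool)) := Prod.snd ⁻¹' (Set.range c)ᶜ ∪ Prod.map e c '' Dᶜ
  have analyticSet_E : AnalyticSet E := by
    have : PolishSpace ((ℕ → Bool) × (ℕ → Bool)) := PolishSpace.mk
    have measurableSet_range : MeasurableSet (Set.range c) :=
      measurableSet_range_of_continuous_injective hc hc_inj
    exact analyticSet_union (measurable_snd measurableSet_range.compl).analyticSet
      (hD.image_of_continuous (he.prodMap hc))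
  have notMem_E_iff (x : X) (β : ℕ → Bool) : (e x, β) ∉ E ↔ ∃ y, (x, y) ∈ D ∧ c y = β := by
    by_cases hβ : β ∈ Set.range c
    · obtain ⟨y, rfl⟩ := hβ
      have mem_image_iff : (e x, c y) ∈ Prod.map e c '' Dᶜ ↔ (x, y) ∈ Dᶜ :=
        (he_inj.prodMap hc_inj).mem_set_image (a := (x, y))
      simp [E, mem_image_iff, hc_inj.eq_iff]
    · exact iff_of_false (fun h => h (.inl hβ)) fun ⟨y, _, hy⟩ => hβ ⟨y, hy⟩
  obtain ⟨F, hF, hFE⟩ := exists_continuous_mem_Pconv_iff analyticSet_E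
  refine ⟨fun x => ContinuousMap.curry ⟨F, hF⟩ (e x),
    (ContinuousMap.curry ⟨F, hF⟩).continuous.comp he, ?_⟩
  ext x
  have mem_Pconv_iff (β : ℕ → Bool) :
      ContinuousMap.curry ⟨F, hF⟩ (e x) β ∈ Pconv ↔ ∃ y, (x, y) ∈ D ∧ c y = β :=
    (hFE _).trans (notMem_E_iff x β)
  simp only [Ctwo, Set.mem_compl_iff, Set.mem_preimage, Set.mem_ofPred_eq, mem_Pconv_iff]
  simp

end Reduction

theorem Ctwo_pi12_complete_general {X Y : Type*} [TopologicalSpace X] [TopologicalSpace Y]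
    [SecondCountableTopology X] [TotallySeparatedSpace X] [PolishSpace Y]
    [TotallySeparatedSpace Y] :
    (IsCoanalytic {p : Ptwo × (ℕ → Bool) | p.1 p.2 ∈ Pconv} ∧
      Ctwoᶜ = Prod.fst '' {p : Ptwo × (ℕ → Bool) | p.1 p.2 ∈ Pconv}) ∧
    ∀ A : Set X, (∃ D : Set (X × Y), IsCoanalytic D ∧ Aᶜ = Prod.fst '' D) →
      ∃ g : X → Ptwo, Continuous g ∧ A = g ⁻¹' Ctwo := by
  refine ⟨⟨isCoanalytic_eval_mem_Pconv, compl_Ctwo⟩, ?_⟩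
  rintro A ⟨D, hD, hA⟩
  rw [← compl_compl A, hA]
  exact exists_continuous_preimage_Ctwo_eq hD

/-- `C₂` is `Π¹₂`-complete: its complement is the projection of
the coanalytic set `{(h,β) : h(β) ∈ 𝓟}` (so `C₂` is `Π¹₂`), and every `Π¹₂`
subset `A` of `2^ω` (i.e. `Aᶜ` is the projection of a coanalytic subset of
`2^ω × ω^ω`) is the preimage of `C₂` under a continuous `g : 2^ω → P₂`. -/
theorem Ctwo_pi12_complete :
    (IsCoanalytic {p : Ptwo × (ℕ → Bool) | p.1 p.2 ∈ Pconv} ∧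
      Ctwoᶜ = Prod.fst '' {p : Ptwo × (ℕ → Bool) | p.1 p.2 ∈ Pconv}) ∧
    ∀ A : Set (ℕ → Bool),
      (∃ D : Set ((ℕ → Bool) × (ℕ → ℕ)), IsCoanalytic D ∧ Aᶜ = Prod.fst '' D) →
      ∃ g : (ℕ → Bool) → Ptwo, Continuous g ∧ A = g ⁻¹' Ctwo :=
  Ctwo_pi12_complete_general
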